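/- Fix L ≥ 1, weight matrices W^1, …, W^{L+1} and perturbed weight matrices W̃^1, …, W̃^{L+1} of the same sizes, and real numbers s ≥ 1 and ε ≥ 0 with ‖W^h‖₂ ≤ s, ‖W̃^h − W^h‖₂ ≤ ε for every h, and ε ≤ 1/(L·s^L). Let x be an input row vector with ‖x‖ ≤ 1, let g^h(x) denote the layers of the ReLU network with weights W^1,…,W^{L+1} (with g^{L+1}(x) := f(x) the output), and g̃^h(x) the layers of the perturbed network. Then for every h with 1 ≤ h ≤ L+1, ‖g̃^h(x) − g^h(x)‖ ≤ e² · h / (L · s^{L+1−h}), where e is Euler's number. (This is the s ≥ 1 case of Lemma 1 with an explicit constant.) -/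

import Mathlib

/-- Euclidean norm of a finite real vector. -/
noncomputable def evnorm {n : ℕ} (v : Fin n → ℝ) : ℝ :=
  ‖(WithLp.equiv 2 (Fin n → ℝ)).symm v‖

/-- ℓ²-operator (spectral) norm of a real matrix. -/
noncomputable def specNorm {m n : ℕ} (A : Matrix (Fin m) (Fin n) ℝ) : ℝ :=
  ‖LinearMap.toContinuousLinearMap (Matrix.toEuclideanLin A)‖

/-- The layers of a ReLU network: `reluNet d W x 0 = x` and
`reluNet d W x (h+1) = σ(reluNet d W x h ⬝ W h)` (entrywise ReLU), where `W h` is the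
weight matrix of layer `h+1` (so `W 0, …, W L` are the paper's `W^1, …, W^{L+1}`). -/
noncomputable def reluNet (d : ℕ → ℕ)
    (W : ∀ h : ℕ, Matrix (Fin (d h)) (Fin (d (h + 1))) ℝ)
    (x : Fin (d 0) → ℝ) : ∀ h : ℕ, Fin (d h) → ℝ
  | 0 => x
  | h + 1 => fun i => max (Matrix.vecMul (reluNet d W x h) (W h) i) 0

/-!
For matching layers `g, g'` and weights `A, A'` one has
`A' g' - A g = A' (g' - g) + (A' - A) g`.  With `‖A‖ ≤ s`, `‖A' - A‖ ≤ ε` and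
`‖g‖ ≤ s ^ n * ‖x‖`, a deviation `‖g' - g‖ ≤ ((s + ε) ^ n - s ^ n) * ‖x‖` therefore becomes
`((s + ε) ^ (n + 1) - s ^ (n + 1)) * ‖x‖` after one linear map, and a nonexpansive activation does
not increase it.  The difference of powers is at most `(n + 1) * ε * (s + ε) ^ n`, and
`(s + ε) ^ n = s ^ n * (1 + ε / s) ^ n ≤ exp 1 * s ^ n` as long as `n * ε ≤ s`.
-/

open WithLp

section RealBounds

variable {s ε : ℝ}

lemma add_pow_le_exp_one_mul_pow {n : ℕ} (hs : 0 ≤ s) (hε : 0 ≤ ε) (hn : n * ε ≤ s) :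
    (s + ε) ^ n ≤ Real.exp 1 * s ^ n := by
  obtain rfl | hs := hs.eq_or_lt
  · obtain rfl | hn0 := n.eq_zero_or_pos
    · simp
    · have hε0 : ε = 0 := le_antisymm (nonpos_of_mul_nonpos_right hn (by positivity)) hε
      simp [hε0, hn0.ne']
  · calc
      (s + ε) ^ n = (ε / s + 1) ^ n * s ^ n := by
        rw [← mul_pow]
        field_simp
        ring
      _ ≤ Real.exp (ε / s) ^ n * s ^ n := by
        gcongr
        exact Real.add_one_le_exp _
      _ = Real.exp (n * ε / s) * s ^ n := by rw [← Real.exp_nat_mul, mul_div_assoc]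
      _ ≤ Real.exp 1 * s ^ n := by
        gcongr
        exact (div_le_one hs).2 hn

lemma add_pow_succ_sub_pow_succ_le {n : ℕ} (hs : 0 ≤ s) (hε : 0 ≤ ε) (hn : n * ε ≤ s) :
    (s + ε) ^ (n + 1) - s ^ (n + 1) ≤ Real.exp 1 * (n + 1) * ε * s ^ n :=
  calc
    (s + ε) ^ (n + 1) - s ^ (n + 1) ≤ ε * (n + 1) * (s + ε) ^ n := by
      have h := (le_abs_self _).trans (abs_pow_sub_pow_le (s + ε) s (n + 1))
      rwa [add_sub_cancel_left, abs_of_nonneg hε, abs_of_nonneg hs,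
        abs_of_nonneg (add_nonneg hs hε), max_eq_left (le_add_of_nonneg_right hε),
        Nat.add_sub_cancel, Nat.cast_succ] at h
    _ ≤ ε * (n + 1) * (Real.exp 1 * s ^ n) := by
      gcongr
      exact add_pow_le_exp_one_mul_pow hs hε hn
    _ = Real.exp 1 * (n + 1) * ε * s ^ n := by ring

lemma mul_pow_le_of_le_one_div {L n : ℕ} (hs : 0 < s) (hεs : ε ≤ 1 / (L * s ^ L)) (hn : n ≤ L) :
    ε * s ^ n ≤ 1 / (L * s ^ (L - n)) :=
  calc
    ε * s ^ n ≤ 1 / (L * s ^ L) * s ^ n := by gcongr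
    _ = 1 / (L * s ^ (L - n)) := by
      rw [← pow_sub_mul_pow s hn]
      field_simp

lemma exp_one_mul_pow_le_exp_one_sq_div {L n : ℕ} (hs : 0 < s) (hεs : ε ≤ 1 / (L * s ^ L))
    (hn : n ≤ L) :
    Real.exp 1 * (n + 1) * ε * s ^ n ≤ Real.exp 1 ^ 2 * (n + 1) / (L * s ^ (L - n)) :=
  calc
    Real.exp 1 * (n + 1) * ε * s ^ n = Real.exp 1 * (n + 1) * (ε * s ^ n) := by ring
    _ ≤ Real.exp 1 * (n + 1) * (1 / (L * s ^ (L - n))) := by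
      gcongr
      exact mul_pow_le_of_le_one_div hs hεs hn
    _ ≤ Real.exp 1 ^ 2 * (n + 1) * (1 / (L * s ^ (L - n))) := by
      gcongr
      exact le_self_pow₀ (Real.one_le_exp zero_le_one) two_ne_zero
    _ = Real.exp 1 ^ 2 * (n + 1) / (L * s ^ (L - n)) := mul_one_div _ _

lemma natCast_mul_le_one_of_le_one_div {L : ℕ} (hs : 1 ≤ s) (hε : 0 ≤ ε)
    (hεs : ε ≤ 1 / (L * s ^ L)) : L * ε ≤ 1 :=
  calc
    L * ε = ε * (L * 1) := by ring
    _ ≤ ε * (L * s ^ L) := by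
      gcongr
      exact one_le_pow₀ hs
    _ ≤ 1 := mul_le_of_le_div₀ zero_le_one (by positivity) hεs

end RealBounds

section Layers

variable {𝕜 : Type*} [NontriviallyNormedField 𝕜]
  {E : ℕ → Type*} [∀ h, SeminormedAddCommGroup (E h)] [∀ h, NormedSpace 𝕜 (E h)]

/-- The layers of a feedforward network without biases: layer `h + 1` is the activation `φ h`
applied to the image of layer `h` under the weight map `A h`. -/
def netLayer (φ : ∀ h, E (h + 1) → E (h + 1)) (A : ∀ h, E h →L[𝕜] E (h + 1)) (x : E 0) :
    ∀ h, E h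
  | 0 => x
  | h + 1 => φ h (A h (netLayer φ A x h))

variable {φ : ∀ h, E (h + 1) → E (h + 1)} {A A' : ∀ h, E h →L[𝕜] E (h + 1)} {s ε : ℝ}

lemma norm_netLayer_le (hφ : ∀ h, LipschitzWith 1 (φ h)) (hφ0 : ∀ h, φ h 0 = 0) {n : ℕ}
    (hA : ∀ h < n, ‖A h‖ ≤ s) (x : E 0) : ‖netLayer φ A x n‖ ≤ s ^ n * ‖x‖ := by
  induction n with
  | zero => simp [netLayer]
  | succ n ih =>
    calc
      ‖netLayer φ A x (n + 1)‖ ≤ ‖A n (netLayer φ A x n)‖ := by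
        simpa [netLayer] using (hφ n).norm_le_mul (hφ0 n) (A n (netLayer φ A x n))
      _ ≤ s * (s ^ n * ‖x‖) :=
        (A n).le_of_opNorm_le_of_le (hA n n.lt_succ_self)
          (ih fun h hh => hA h (hh.trans n.lt_succ_self))
      _ = s ^ (n + 1) * ‖x‖ := by ring

lemma norm_netLayer_succ_sub_le (hφ : ∀ h, LipschitzWith 1 (φ h)) (x : E 0) (n : ℕ) :
    ‖netLayer φ A' x (n + 1) - netLayer φ A x (n + 1)‖ ≤
      ‖A' n (netLayer φ A' x n) - A n (netLayer φ A x n)‖ := by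
  simpa [netLayer] using (hφ n).norm_sub_le (A' n (netLayer φ A' x n)) (A n (netLayer φ A x n))

lemma norm_map_netLayer_sub_le (hφ : ∀ h, LipschitzWith 1 (φ h)) (hφ0 : ∀ h, φ h 0 = 0) {n : ℕ}
    (hA : ∀ h ≤ n, ‖A h‖ ≤ s) (hA' : ∀ h ≤ n, ‖A' h - A h‖ ≤ ε) (x : E 0) :
    ‖A' n (netLayer φ A' x n) - A n (netLayer φ A x n)‖ ≤
      ((s + ε) ^ (n + 1) - s ^ (n + 1)) * ‖x‖ := by
  induction n with
  | zero => simpa [netLayer] using (A' 0 - A 0).le_of_opNorm_le (hA' 0 le_rfl) x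
  | succ n ih =>
    set g := netLayer φ A x (n + 1)
    set g' := netLayer φ A' x (n + 1)
    have hg : ‖g‖ ≤ s ^ (n + 1) * ‖x‖ := norm_netLayer_le hφ hφ0 (fun h hh => hA h hh.le) x
    have hgg' : ‖g' - g‖ ≤ ((s + ε) ^ (n + 1) - s ^ (n + 1)) * ‖x‖ :=
      (norm_netLayer_succ_sub_le hφ x n).trans
        (ih (fun h hh => hA h (hh.trans n.le_succ)) fun h hh => hA' h (hh.trans n.le_succ))
    have hA'_norm : ‖A' (n + 1)‖ ≤ s + ε :=
      (norm_le_insert' _ _).trans (add_le_add (hA _ le_rfl) (hA' _ le_rfl))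
    calc
      ‖A' (n + 1) g' - A (n + 1) g‖
          = ‖A' (n + 1) (g' - g) + (A' (n + 1) - A (n + 1)) g‖ := by simp
      _ ≤ (s + ε) * (((s + ε) ^ (n + 1) - s ^ (n + 1)) * ‖x‖) + ε * (s ^ (n + 1) * ‖x‖) :=
        norm_add_le_of_le ((A' (n + 1)).le_of_opNorm_le_of_le hA'_norm hgg')
          ((A' (n + 1) - A (n + 1)).le_of_opNorm_le_of_le (hA' _ le_rfl) hg)
      _ = ((s + ε) ^ (n + 1 + 1) - s ^ (n + 1 + 1)) * ‖x‖ := by ring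

theorem relu_net_perturbation_bound_s_ge_one_general
    (hφ : ∀ h, LipschitzWith 1 (φ h)) (hφ0 : ∀ h, φ h 0 = 0) {L : ℕ} (hεs : L * ε ≤ s)
    (hA : ∀ h ≤ L, ‖A h‖ ≤ s) (hA' : ∀ h ≤ L, ‖A' h - A h‖ ≤ ε) (x : E 0) :
    (∀ h < L, ‖netLayer φ A' x (h + 1) - netLayer φ A x (h + 1)‖ ≤
      Real.exp 1 * (h + 1) * ε * s ^ h * ‖x‖) ∧
    ‖A' L (netLayer φ A' x L) - A L (netLayer φ A x L)‖ ≤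
      Real.exp 1 * (L + 1) * ε * s ^ L * ‖x‖ := by
  have hs : 0 ≤ s := (norm_nonneg _).trans (hA 0 L.zero_le)
  have hε : 0 ≤ ε := (norm_nonneg _).trans (hA' 0 L.zero_le)
  have deviation_le : ∀ n ≤ L, ‖A' n (netLayer φ A' x n) - A n (netLayer φ A x n)‖ ≤
      Real.exp 1 * (n + 1) * ε * s ^ n * ‖x‖ := fun n hn =>
    calc
      ‖A' n (netLayer φ A' x n) - A n (netLayer φ A x n)‖
          ≤ ((s + ε) ^ (n + 1) - s ^ (n + 1)) * ‖x‖ :=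
        norm_map_netLayer_sub_le hφ hφ0 (fun h hh => hA h (hh.trans hn))
          (fun h hh => hA' h (hh.trans hn)) x
      _ ≤ Real.exp 1 * (n + 1) * ε * s ^ n * ‖x‖ := by
        gcongr
        exact add_pow_succ_sub_pow_succ_le hs hε (le_trans (by gcongr) hεs)
  exact ⟨fun h hh => (norm_netLayer_succ_sub_le hφ x h).trans (deviation_le h hh.le),
    deviation_le L le_rfl⟩

end Layers

section Euclidean

/-- The map of Euclidean spaces applying `f` to every coordinate, such as an entrywise
activation. -/
def euclideanMap {ι : Type*} (f : ℝ → ℝ) : EuclideanSpace ℝ ι → EuclideanSpace ℝ ι :=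
  WithLp.map 2 (f ∘ ·)

lemma lipschitzWith_euclideanMap {ι : Type*} [Fintype ι] {K : NNReal} {f : ℝ → ℝ}
    (hf : LipschitzWith K f) : LipschitzWith K (euclideanMap (ι := ι) f) := by
  refine LipschitzWith.of_dist_le_mul fun u v => ?_
  calc
    dist (euclideanMap f u) (euclideanMap f v) = √(∑ i, dist (f (u i)) (f (v i)) ^ 2) :=
      EuclideanSpace.dist_eq _ _
    _ ≤ √(∑ i, (K * dist (u i) (v i)) ^ 2) := by
      gcongr
      exact hf.dist_le_mul _ _
    _ = K * dist u v := by
      simp only [mul_pow, ← Finset.mul_sum]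
      rw [Real.sqrt_mul (by positivity), Real.sqrt_sq K.coe_nonneg, EuclideanSpace.dist_eq]

/-- Right multiplication `v ↦ v A` of row vectors by `A`, as a map of Euclidean spaces. It is
built from the transpose because Mathlib's `Matrix.toEuclideanLin` acts on column vectors. -/
noncomputable def vecMulCLM {m n : ℕ} (A : Matrix (Fin m) (Fin n) ℝ) :
    EuclideanSpace ℝ (Fin m) →L[ℝ] EuclideanSpace ℝ (Fin n) :=
  (Matrix.toEuclideanLin A.transpose).toContinuousLinearMap

variable {m n : ℕ}

lemma vecMulCLM_toLp (A : Matrix (Fin m) (Fin n) ℝ) (v : Fin m → ℝ) :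
    vecMulCLM A (toLp 2 v) = toLp 2 (Matrix.vecMul v A) := by
  simp [vecMulCLM, Matrix.mulVec_transpose]

lemma vecMulCLM_sub (A B : Matrix (Fin m) (Fin n) ℝ) :
    vecMulCLM (A - B) = vecMulCLM A - vecMulCLM B := by
  simp [vecMulCLM]

open scoped Matrix.Norms.L2Operator in
lemma norm_vecMulCLM (A : Matrix (Fin m) (Fin n) ℝ) : ‖vecMulCLM A‖ = specNorm A := by
  simpa only [Matrix.conjTranspose_eq_transpose_of_trivial] using! Matrix.l2_opNorm_conjTranspose A

lemma toLp_reluNet (d : ℕ → ℕ) (W : ∀ h, Matrix (Fin (d h)) (Fin (d (h + 1))) ℝ)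
    (x : Fin (d 0) → ℝ) (h : ℕ) :
    toLp 2 (reluNet d W x h) = netLayer (E := fun h => EuclideanSpace ℝ (Fin (d h)))
      (fun _ => euclideanMap (max · 0)) (fun h => vecMulCLM (W h)) (toLp 2 x) h := by
  induction h with
  | zero => rfl
  | succ h ih =>
    rw [netLayer, ← ih, vecMulCLM_toLp]
    rfl

end Euclidean

/-- **Lemma 1 (case `s ≥ 1`, explicit constant).** If every weight matrix has spectral
norm at most `s ≥ 1`, every weight perturbation has spectral norm at most
`ε ≤ 1/(L·s^L)`, and `‖x‖ ≤ 1`, then every hidden activation of the perturbed ReLU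
network deviates from the unperturbed one by at most `e²·h/(L·s^{L+1−h})`, and the
network outputs (`g^{L+1} = f`) deviate by at most `e²·(L+1)/L`. -/
theorem relu_net_perturbation_bound_s_ge_one
    (L : ℕ) (hL : 1 ≤ L) (d : ℕ → ℕ)
    (W W' : ∀ h : ℕ, Matrix (Fin (d h)) (Fin (d (h + 1))) ℝ)
    (s ε : ℝ) (hs : 1 ≤ s) (hε : 0 ≤ ε) (hεs : ε ≤ 1 / (L * s ^ L))
    (hW : ∀ h, h ≤ L → specNorm (W h) ≤ s)
    (hW' : ∀ h, h ≤ L → specNorm (W' h - W h) ≤ ε)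
    (x : Fin (d 0) → ℝ) (hx : evnorm x ≤ 1) :
    (∀ h, 1 ≤ h → h ≤ L →
      evnorm (reluNet d W' x h - reluNet d W x h) ≤
        Real.exp 1 ^ 2 * h / (L * s ^ (L + 1 - h))) ∧
    evnorm (Matrix.vecMul (reluNet d W' x L) (W' L) -
        Matrix.vecMul (reluNet d W x L) (W L)) ≤
      Real.exp 1 ^ 2 * (L + 1) / (L * s ^ (L + 1 - (L + 1))) := by
  obtain ⟨hidden, output⟩ := relu_net_perturbation_bound_s_ge_one_general
    (E := fun h => EuclideanSpace ℝ (Fin (d h))) (φ := fun _ => euclideanMap (max · 0))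
    (A := fun h => vecMulCLM (W h)) (A' := fun h => vecMulCLM (W' h))
    (fun _ => lipschitzWith_euclideanMap (LipschitzWith.id.max_const 0))
    (fun _ => by ext; simp [euclideanMap])
    ((natCast_mul_le_one_of_le_one_div hs hε hεs).trans hs)
    (fun h hh => (norm_vecMulCLM _).trans_le (hW h hh))
    (fun h hh => by rw [← vecMulCLM_sub, norm_vecMulCLM]; exact hW' h hh) (toLp 2 x)
  simp only [← toLp_reluNet, vecMulCLM_toLp, ← toLp_sub] at hidden output
  have bound_le : ∀ n ≤ L, Real.exp 1 * (n + 1) * ε * s ^ n * evnorm x ≤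
      Real.exp 1 ^ 2 * (n + 1) / (L * s ^ (L + 1 - (n + 1))) := fun n hn =>
    (mul_le_of_le_one_right (by positivity) hx).trans <| by
      simpa only [Nat.add_sub_add_right] using
        exp_one_mul_pow_le_exp_one_sq_div (one_pos.trans_le hs) hεs hn
  refine ⟨fun h h_pos hh => ?_, output.trans (bound_le L le_rfl)⟩
  obtain ⟨n, rfl⟩ := Nat.exists_eq_add_of_le' h_pos
  exact_mod_cast (hidden n hh).trans (bound_le n (Nat.le_of_succ_le hh))
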